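/- Let (X,T) be a topological dynamical system and let K ⊆ X be a non-empty compact set. Then the packing topological entropy of K equals the supremum of the measure-theoretical upper entropies over all Borel probability measures giving K full measure: h^P_top(T,K) = sup { h̄_μ(T) : μ a Borel probability measure on X with μ(K) = 1 }. -/

import Mathlib

/-! Let `μ` be a probability measure carried by `K`. If the upper local entropy at some scale `ε`
exceeds `t > s` on a set `A ⊆ K` of positive measure, then each point of `A` satisfies
`μ (B_n(x, ε)) ≤ exp (-t n)` for infinitely many `n`. For a given `n`, a maximal packing of these
points by closed Bowen balls of radius `ε / 3` turns into a cover by open Bowen balls of radius `ε`;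
summing a geometric series over `n` shows that a set with finite packing sum of exponent `s` meets
`A` in a null set. Every countable cover of `A` has a piece that does not, so the packing measure of
`K` is infinite.

Conversely, let the packing measure of `K` of exponent `t` be positive at scale `ε`, and let
`s < t`. Some non-empty `K' ⊆ K` has positive packing measure, hence infinite packing sums of
exponent `s`, near each of its points. Following Joyce and Preiss, start from a unit mass on `K'`
and repeatedly replace each atom `x` by finitely many atoms `y`, very close to `x`, that form a
packing by Bowen balls of large orders `n_y`, distributing the mass of `x` so that `y` receives at
most `exp (-s n_y)`. The atoms of one stage are separated with some room, in which all later
displacements take place. So a Bowen ball of order `n_x` and radius `ε` about any point near the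
atom `x` carries at most `exp (-s n_x)` at every later stage. Bowen balls are open, so a weak limit
`μ` inherits this bound: at `μ`-almost every `z`, `μ (B_n(z, ε)) ≤ exp (-s n)` for infinitely many
`n`, and the upper entropy of `μ` is at least `s`. -/

open Filter Set MeasureTheory Topology
open scoped ENNReal NNReal

section Core

variable {X : Type*} [MetricSpace X]

/-- The open Bowen ball `B_n(x, ε)` = `{y : d_n(x,y) < ε}` where
`d_n(x,y) = max_{0 ≤ k ≤ n-1} d(T^k x, T^k y)` is the `n`-th Bowen metric. -/
def bowenBall (T : X → X) (x : X) (n : ℕ) (ε : ℝ) : Set X :=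
  {y | ∀ k < n, dist (T^[k] x) (T^[k] y) < ε}

/-- The closed Bowen ball `B̄_n(x, ε)` = `{y : d_n(x,y) ≤ ε}`. -/
def bowenClosedBall (T : X → X) (x : X) (n : ℕ) (ε : ℝ) : Set X :=
  {y | ∀ k < n, dist (T^[k] x) (T^[k] y) ≤ ε}

/-- `M^s_{N,ε}(Z)`: infimum of `Σ_i exp (- s n_i)` over finite or countable families
of open Bowen balls `{B_{n_i}(x_i, ε)}` with `n_i ≥ N` covering `Z`. -/
noncomputable def Mpre (T : X → X) (s : ℝ) (N : ℕ) (ε : ℝ) (Z : Set X) : ℝ≥0∞ :=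
  ⨅ (I : Set ℕ) (x : ℕ → X) (n : ℕ → ℕ) (_ : ∀ i ∈ I, N ≤ n i)
    (_ : Z ⊆ ⋃ i ∈ I, bowenBall T (x i) (n i) ε),
    ∑' i : I, ENNReal.ofReal (Real.exp (-s * n i))

/-- `M^s_ε(Z) = lim_{N → ∞} M^s_{N,ε}(Z)` (the quantity is nondecreasing in `N`). -/
noncomputable def MpreEps (T : X → X) (s : ℝ) (ε : ℝ) (Z : Set X) : ℝ≥0∞ :=
  ⨆ N : ℕ, Mpre T s N ε Z

/-- `M^s(Z) = lim_{ε → 0} M^s_ε(Z)` (the quantity is nondecreasing as `ε` decreases). -/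
noncomputable def Mtop (T : X → X) (s : ℝ) (Z : Set X) : ℝ≥0∞ :=
  ⨆ (ε : ℝ) (_ : 0 < ε), MpreEps T s ε Z

/-- Bowen's topological entropy `h^B_top(T,Z)`: the critical value of `s` at which
`M^s(Z)` jumps from `∞` to `0`. -/
noncomputable def bowenEntropy (T : X → X) (Z : Set X) : ℝ≥0∞ :=
  ⨆ (s : ℝ) (_ : Mtop T s Z = ∞), ENNReal.ofReal s

/-- `P^s_{N,ε}(Z)`: suprema of `Σ_i exp (- s n_i)` over finite or countable pairwise
disjoint families of closed Bowen balls `{B̄_{n_i}(x_i, ε)}` with `x_i ∈ Z`, `n_i ≥ N`. -/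
noncomputable def Ppre (T : X → X) (s : ℝ) (N : ℕ) (ε : ℝ) (Z : Set X) : ℝ≥0∞ :=
  ⨆ (I : Set ℕ) (x : ℕ → X) (n : ℕ → ℕ) (_ : ∀ i ∈ I, x i ∈ Z ∧ N ≤ n i)
    (_ : ∀ i ∈ I, ∀ j ∈ I, i ≠ j →
      Disjoint (bowenClosedBall T (x i) (n i) ε) (bowenClosedBall T (x j) (n j) ε)),
    ∑' i : I, ENNReal.ofReal (Real.exp (-s * n i))

/-- `P^s_ε(Z) = lim_{N → ∞} P^s_{N,ε}(Z)` (the quantity is nonincreasing in `N`). -/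
noncomputable def PpreEps (T : X → X) (s : ℝ) (ε : ℝ) (Z : Set X) : ℝ≥0∞ :=
  ⨅ N : ℕ, Ppre T s N ε Z

/-- `𝒫^s_ε(Z) = inf { Σ_{i} P^s_ε(Z_i) : ⋃_i Z_i ⊇ Z }`. -/
noncomputable def Pouter (T : X → X) (s : ℝ) (ε : ℝ) (Z : Set X) : ℝ≥0∞ :=
  ⨅ (Zs : ℕ → Set X) (_ : Z ⊆ ⋃ i, Zs i), ∑' i, PpreEps T s ε (Zs i)

/-- `h^P_top(T,Z,ε)`: the critical value of `s` at which `𝒫^s_ε(Z)` jumps from `∞` to `0`. -/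
noncomputable def packEntropyEps (T : X → X) (ε : ℝ) (Z : Set X) : ℝ≥0∞ :=
  ⨆ (s : ℝ) (_ : Pouter T s ε Z = ∞), ENNReal.ofReal s

/-- The packing topological entropy `h^P_top(T,Z) = lim_{ε → 0} h^P_top(T,Z,ε)`
(the quantity is nondecreasing as `ε` decreases). -/
noncomputable def packEntropy (T : X → X) (Z : Set X) : ℝ≥0∞ :=
  ⨆ (ε : ℝ) (_ : 0 < ε), packEntropyEps T ε Z

/-- `r_n(Z,ε)`: the largest cardinality of an `(n,ε)`-separated subset of `Z`,
i.e. a set in which distinct points `x, y` satisfy `d_n(x,y) > ε`. -/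
noncomputable def maxSep (T : X → X) (Z : Set X) (n : ℕ) (ε : ℝ) : ℝ≥0∞ :=
  ⨆ (E : Finset X) (_ : ↑E ⊆ Z ∧
    ∀ x ∈ E, ∀ y ∈ E, x ≠ y → ∃ k < n, ε < dist (T^[k] x) (T^[k] y)),
    (E.card : ℝ≥0∞)

/-- Logarithm on `ℝ≥0∞` (with `elog ∞ = ∞`), used for counting quantities. -/
noncomputable def elog (x : ℝ≥0∞) : ℝ≥0∞ :=
  if x = ∞ then ∞ else ENNReal.ofReal (Real.log x.toReal)

/-- The upper capacity topological entropy
`h^{UC}_top(T,Z) = lim_{ε → 0} limsup_{n → ∞} (1/n) log r_n(Z,ε)`. -/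
noncomputable def upcapEntropy (T : X → X) (Z : Set X) : ℝ≥0∞ :=
  ⨆ (ε : ℝ) (_ : 0 < ε), Filter.limsup (fun n : ℕ => elog (maxSep T Z n ε) / n) Filter.atTop

/-- `- log x` as a function `ℝ≥0∞ → ℝ≥0∞` (with `negLog 0 = ∞`), used for measures of balls. -/
noncomputable def negLog (x : ℝ≥0∞) : ℝ≥0∞ :=
  if x = 0 then ∞ else ENNReal.ofReal (-Real.log x.toReal)

variable [MeasurableSpace X]

/-- The lower local entropy `h̲_μ(T,x) = lim_{ε→0} liminf_{n→∞} -(1/n) log μ(B_n(x,ε))`. -/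
noncomputable def lowerLocalEntropy (T : X → X) (μ : Measure X) (x : X) : ℝ≥0∞ :=
  ⨆ (ε : ℝ) (_ : 0 < ε),
    Filter.liminf (fun n : ℕ => negLog (μ (bowenBall T x n ε)) / n) Filter.atTop

/-- The upper local entropy `h̄_μ(T,x) = lim_{ε→0} limsup_{n→∞} -(1/n) log μ(B_n(x,ε))`. -/
noncomputable def upperLocalEntropy (T : X → X) (μ : Measure X) (x : X) : ℝ≥0∞ :=
  ⨆ (ε : ℝ) (_ : 0 < ε),
    Filter.limsup (fun n : ℕ => negLog (μ (bowenBall T x n ε)) / n) Filter.atTop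

/-- The measure-theoretical lower entropy `h̲_μ(T) = ∫ h̲_μ(T,x) dμ(x)`. -/
noncomputable def lowerEntropy (T : X → X) (μ : Measure X) : ℝ≥0∞ :=
  ∫⁻ x, lowerLocalEntropy T μ x ∂μ

/-- The measure-theoretical upper entropy `h̄_μ(T) = ∫ h̄_μ(T,x) dμ(x)`. -/
noncomputable def upperEntropy (T : X → X) (μ : Measure X) : ℝ≥0∞ :=
  ∫⁻ x, upperLocalEntropy T μ x ∂μ

end Core

section BowenBalls

variable {X : Type*} [MetricSpace X] {T : X → X} {x y : X} {n : ℕ} {ε δ : ℝ}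

lemma mem_bowenClosedBall_self (hε : 0 ≤ ε) : x ∈ bowenClosedBall T x n ε :=
  fun k _ => (dist_self (T^[k] x)).trans_le hε

lemma bowenClosedBall_anti_order {m : ℕ} (h : m ≤ n) :
    bowenClosedBall T x n ε ⊆ bowenClosedBall T x m ε :=
  fun _ hy k hk => hy k (hk.trans_le h)

lemma bowenBall_subset_bowenBall (h : δ ≤ ε) : bowenBall T x n δ ⊆ bowenBall T x n ε :=
  fun _ hy k hk => (hy k hk).trans_le h

lemma bowenBall_subset_bowenClosedBall : bowenBall T x n ε ⊆ bowenClosedBall T x n ε :=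
  fun _ hy k hk => (hy k hk).le

lemma mem_bowenBall_of_bowenClosedBall_inter_nonempty
    (h : (bowenClosedBall T x n δ ∩ bowenClosedBall T y n δ).Nonempty) (hδ : 2 * δ < ε) :
    x ∈ bowenBall T y n ε := by
  obtain ⟨z, hzx, hzy⟩ := h
  intro k hk
  calc dist (T^[k] y) (T^[k] x)
      ≤ dist (T^[k] y) (T^[k] z) + dist (T^[k] x) (T^[k] z) := dist_triangle_right ..
    _ ≤ δ + δ := add_le_add (hzy k hk) (hzx k hk)
    _ < ε := by linarith

lemma isOpen_bowenBall (hT : Continuous T) (x : X) (n : ℕ) (ε : ℝ) :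
    IsOpen (bowenBall T x n ε) := by
  have hball : bowenBall T x n ε =
      ⋂ k ∈ Iio n, {y | dist (T^[k] x) (T^[k] y) < ε} := by
    ext; simp [bowenBall]
  rw [hball]
  exact (finite_Iio n).isOpen_biInter fun k _ =>
    isOpen_lt (continuous_const.dist (hT.iterate k)) continuous_const

lemma isClosed_setOf_mem_bowenClosedBall (hT : Continuous T) (n : ℕ) (ε : ℝ) :
    IsClosed {p : X × X | p.2 ∈ bowenClosedBall T p.1 n ε} := by
  have hball : {p : X × X | p.2 ∈ bowenClosedBall T p.1 n ε} =
      ⋂ k ∈ Iio n, {p | dist (T^[k] p.1) (T^[k] p.2) ≤ ε} := by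
    ext; simp [bowenClosedBall]
  rw [hball]
  exact isClosed_biInter fun k _ => isClosed_le
    (((hT.iterate k).comp continuous_fst).dist ((hT.iterate k).comp continuous_snd))
    continuous_const

end BowenBalls

section NegLog

lemma antitone_negLog : Antitone negLog := by
  intro a b hab
  by_cases ha : a = 0
  · simp [negLog, ha]
  by_cases hb : b = ∞
  · simp [negLog, hb]
  rw [negLog, negLog, if_neg ha, if_neg (hab.trans_lt' (pos_iff_ne_zero.2 ha)).ne']
  gcongr
  exact ENNReal.toReal_pos ha (ne_top_of_le_ne_top hb hab)

lemma ofReal_le_negLog_div_iff {a : ℝ≥0∞} {s : ℝ} {n : ℕ} (hs : 0 < s) (hn : 0 < n) :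
    ENNReal.ofReal s ≤ negLog a / n ↔ a ≤ ENNReal.ofReal (Real.exp (-s * n)) := by
  have hn' : (0 : ℝ) < n := Nat.cast_pos.2 hn
  rcases eq_or_ne a 0 with rfl | ha
  · simp [negLog, ENNReal.top_div]
  rcases eq_or_ne a ∞ with rfl | ha'
  · simp [negLog, hs]
  have hpos : 0 < a.toReal := ENNReal.toReal_pos ha ha'
  rw [negLog, if_neg ha, ← ENNReal.ofReal_natCast n, ← ENNReal.ofReal_div_of_pos hn',
    ENNReal.ofReal_le_ofReal_iff', ENNReal.le_ofReal_iff_toReal_le ha' (Real.exp_nonneg _),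
    ← Real.log_le_iff_le_exp hpos, le_div_iff₀ hn', neg_mul, le_neg]
  simp [hs.not_ge]

end NegLog

section PackingSums

variable {X : Type*} [MetricSpace X] {T : X → X} {s t ε : ℝ} {N : ℕ} {Z : Set X}

lemma tsum_le_Ppre {ι : Type*} {x : ι → X} {n : ι → ℕ} (hx : ∀ i, x i ∈ Z) (hn : ∀ i, N ≤ n i)
    (hdisj : Pairwise fun i j =>
      Disjoint (bowenClosedBall T (x i) (n i) ε) (bowenClosedBall T (x j) (n j) ε)) :
    ∑' i, ENNReal.ofReal (Real.exp (-s * n i)) ≤ Ppre T s N ε Z := by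
  rw [ENNReal.tsum_eq_iSup_sum]
  refine iSup_le fun F => ?_
  rcases F.eq_empty_or_nonempty with rfl | hF
  · simp
  have := hF.to_subtype
  obtain ⟨f, hf⟩ := exists_injective_nat F
  set g : ℕ → ι := fun k => (Function.invFun f k : F)
  have hg (i : F) : g (f i) = i := congrArg Subtype.val (Function.leftInverse_invFun hf i)
  refine le_iSup_of_le (range f) <| le_iSup_of_le (x ∘ g) <| le_iSup_of_le (n ∘ g) <|
    le_iSup₂_of_le (fun k _ => ⟨hx (g k), hn (g k)⟩) ?_ ?_
  · rintro _ ⟨i, rfl⟩ _ ⟨j, rfl⟩ hij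
    simp only [Function.comp_apply, hg]
    exact hdisj fun h => hij (congrArg f (Subtype.ext h))
  · rw [tsum_range (fun k => ENNReal.ofReal (Real.exp (-s * (n ∘ g) k))) hf, tsum_fintype,
      ← Finset.sum_coe_sort]
    simp only [Function.comp_apply, hg, le_refl]

lemma Ppre_anti_order {M : ℕ} (h : M ≤ N) : Ppre T s N ε Z ≤ Ppre T s M ε Z :=
  iSup_mono fun _ => iSup_mono fun _ => iSup_mono fun _ => iSup_mono' fun hx =>
    ⟨fun i hi => ⟨(hx i hi).1, h.trans (hx i hi).2⟩, le_rfl⟩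

lemma Ppre_mono {W : Set X} (h : Z ⊆ W) : Ppre T s N ε Z ≤ Ppre T s N ε W :=
  iSup_mono fun _ => iSup_mono fun _ => iSup_mono fun _ => iSup_mono' fun hx =>
    ⟨fun i hi => ⟨h (hx i hi).1, (hx i hi).2⟩, le_rfl⟩

lemma Ppre_empty : Ppre T s N ε ∅ = 0 := by
  simp only [Ppre, ENNReal.iSup_eq_zero, ENNReal.tsum_eq_zero]
  exact fun I x n hx _ i => (hx i i.2).1.elim

lemma Ppre_le_exp_mul_Ppre (hst : s ≤ t) :
    Ppre T t N ε Z ≤ ENNReal.ofReal (Real.exp (-(t - s) * N)) * Ppre T s N ε Z := by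
  refine iSup_le fun I => iSup_le fun x => iSup_le fun n => iSup₂_le fun hx hdisj => ?_
  have hterm (i : I) : ENNReal.ofReal (Real.exp (-t * n i)) ≤
      ENNReal.ofReal (Real.exp (-(t - s) * N)) * ENNReal.ofReal (Real.exp (-s * n i)) := by
    rw [← ENNReal.ofReal_mul (Real.exp_nonneg _), ← Real.exp_add]
    have hn : (N : ℝ) ≤ n i := Nat.cast_le.2 (hx i i.2).2
    gcongr
    nlinarith
  calc ∑' i : I, ENNReal.ofReal (Real.exp (-t * n i))
      ≤ ENNReal.ofReal (Real.exp (-(t - s) * N)) *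
          ∑' i : I, ENNReal.ofReal (Real.exp (-s * n i)) :=
        (ENNReal.tsum_le_tsum hterm).trans_eq ENNReal.tsum_mul_left
    _ ≤ ENNReal.ofReal (Real.exp (-(t - s) * N)) * Ppre T s N ε Z := by
        gcongr
        exact tsum_le_Ppre (fun i => (hx i i.2).1) (fun i => (hx i i.2).2)
          fun i j hij => hdisj i i.2 j j.2 (Subtype.coe_injective.ne hij)

lemma PpreEps_ne_top_iff : PpreEps T s ε Z ≠ ∞ ↔ ∃ N, Ppre T s N ε Z ≠ ∞ := by
  simp [PpreEps]

lemma PpreEps_mono {W : Set X} (h : Z ⊆ W) : PpreEps T s ε Z ≤ PpreEps T s ε W :=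
  iInf_mono fun _ => Ppre_mono h

lemma PpreEps_empty (T : X → X) (s ε : ℝ) : PpreEps T s ε ∅ = 0 := by
  simp [PpreEps, Ppre_empty]

lemma PpreEps_eq_zero_of_lt (hst : s < t) (h : PpreEps T s ε Z ≠ ∞) : PpreEps T t ε Z = 0 := by
  obtain ⟨N, hN⟩ := PpreEps_ne_top_iff.1 h
  have hexp : Tendsto (fun M : ℕ => ENNReal.ofReal (Real.exp (-(t - s) * M))) atTop (𝓝 0) := by
    rw [← ENNReal.ofReal_zero]
    exact ENNReal.tendsto_ofReal <| Real.tendsto_exp_atBot.comp <|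
      tendsto_natCast_atTop_atTop.const_mul_atTop_of_neg (by linarith)
  have hlim : Tendsto (fun M : ℕ => ENNReal.ofReal (Real.exp (-(t - s) * M)) * Ppre T s N ε Z)
      atTop (𝓝 0) := by
    simpa using ENNReal.Tendsto.mul_const hexp (Or.inr hN)
  refine nonpos_iff_eq_zero.1 (ge_of_tendsto hlim ?_)
  filter_upwards [eventually_ge_atTop N] with M hM
  calc PpreEps T t ε Z ≤ Ppre T t M ε Z := iInf_le _ M
    _ ≤ ENNReal.ofReal (Real.exp (-(t - s) * M)) * Ppre T s M ε Z := Ppre_le_exp_mul_Ppre hst.le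
    _ ≤ ENNReal.ofReal (Real.exp (-(t - s) * M)) * Ppre T s N ε Z := by
        gcongr
        exact Ppre_anti_order hM

/-- The packing measure `𝒫^s_ε`, bundled as an outer measure; its value on `Z` is `Pouter T s ε Z`
by definition. -/
noncomputable def packingOuterMeasure (T : X → X) (s ε : ℝ) : OuterMeasure X :=
  OuterMeasure.ofFunction (PpreEps T s ε) (PpreEps_empty T s ε)

lemma packingOuterMeasure_le_PpreEps : packingOuterMeasure T s ε Z ≤ PpreEps T s ε Z :=
  OuterMeasure.ofFunction_le Z

lemma PpreEps_eq_top_of_packingOuterMeasure_ne_zero (hst : s < t)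
    (h : packingOuterMeasure T t ε Z ≠ 0) : PpreEps T s ε Z = ∞ := by
  contrapose! h
  rw [← nonpos_iff_eq_zero, ← PpreEps_eq_zero_of_lt hst h]
  exact packingOuterMeasure_le_PpreEps

lemma ofReal_le_packEntropy (hε : 0 < ε) (h : packingOuterMeasure T s ε Z = ∞) :
    ENNReal.ofReal s ≤ packEntropy T Z :=
  le_iSup₂_of_le ε hε (le_iSup₂_of_le s h le_rfl)

end PackingSums

section LowerBound

variable {X : Type*} [MetricSpace X] [MeasurableSpace X] {T : X → X} {μ : Measure X}
  {s t ε δ : ℝ} {n : ℕ} {E : Set X}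

/-- The upper local entropy at a fixed scale `ε`, before the limit `ε → 0`. -/
noncomputable def upperLocalEntropyEps (T : X → X) (μ : Measure X) (ε : ℝ) (x : X) : ℝ≥0∞ :=
  limsup (fun n : ℕ => negLog (μ (bowenBall T x n ε)) / n) atTop

lemma upperLocalEntropyEps_anti {x : X} (h : δ ≤ ε) :
    upperLocalEntropyEps T μ ε x ≤ upperLocalEntropyEps T μ δ x :=
  limsup_le_limsup <| Eventually.of_forall fun n => ENNReal.div_le_div_right
    (antitone_negLog (measure_mono (bowenBall_subset_bowenBall h))) n

lemma exists_measure_lt_upperLocalEntropyEps_ne_zero [IsProbabilityMeasure μ] {c : ℝ≥0∞}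
    (h : c < upperEntropy T μ) : ∃ ε > 0, μ {x | c < upperLocalEntropyEps T μ ε x} ≠ 0 := by
  contrapose! h
  have hscale (k : ℕ) : ∀ᵐ x ∂μ, upperLocalEntropyEps T μ (1 / (k + 1)) x ≤ c := by
    simpa only [ae_iff, not_le] using h _ Nat.one_div_pos_of_nat
  have hle : ∀ᵐ x ∂μ, upperLocalEntropy T μ x ≤ c := by
    filter_upwards [ae_all_iff.2 hscale] with x hx
    refine iSup₂_le fun ε hε => ?_
    obtain ⟨k, hk⟩ := exists_nat_one_div_lt hε
    exact (upperLocalEntropyEps_anti hk.le).trans (hx k)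
  calc upperEntropy T μ ≤ ∫⁻ _, c ∂μ := lintegral_mono_ae hle
    _ = c := by simp

lemma frequently_measure_bowenBall_le_exp {x : X} (hs : 0 < s)
    (h : ENNReal.ofReal s < upperLocalEntropyEps T μ ε x) :
    ∃ᶠ n : ℕ in atTop, μ (bowenBall T x n ε) ≤ ENNReal.ofReal (Real.exp (-s * n)) :=
  ((frequently_lt_of_lt_limsup (by isBoundedDefault) h).and_eventually
    (eventually_gt_atTop 0)).mono fun _ hn => (ofReal_le_negLog_div_iff hs hn.2).1 hn.1.le

-- A maximal packing of `E` by closed balls of radius `δ` covers `E` by open balls of radius `ε`.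
lemma measure_le_exp_mul_Ppre (hδ : 0 ≤ δ) (hδε : 2 * δ < ε)
    (hE : ∀ x ∈ E, μ (bowenBall T x n ε) ≤ ENNReal.ofReal (Real.exp (-t * n))) :
    μ E ≤ ENNReal.ofReal (Real.exp (-(t - s) * n)) * Ppre T s n δ E := by
  obtain ⟨u, huE, hdisj, hu⟩ := Vitali.exists_disjoint_subfamily_covering_enlargement
    (fun x => bowenClosedBall T x n δ) E (fun _ => 0) 2 one_lt_two (fun _ _ => le_rfl) 1
    (fun _ _ => zero_le_one) (fun x _ => ⟨x, mem_bowenClosedBall_self hδ⟩)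
  have hcover : E ⊆ ⋃ x ∈ u, bowenBall T x n ε := fun x hx => by
    obtain ⟨y, hy, hxy, -⟩ := hu x hx
    exact mem_biUnion hy (mem_bowenBall_of_bowenClosedBall_inter_nonempty hxy hδε)
  have hsum : ∑' _ : u, ENNReal.ofReal (Real.exp (-s * n)) ≤ Ppre T s n δ E :=
    tsum_le_Ppre (x := ((↑) : u → X)) (fun x => huE x.2) (fun _ => le_rfl)
      fun x y hxy => hdisj x.2 y.2 (Subtype.coe_injective.ne hxy)
  rcases eq_or_ne (Ppre T s n δ E) ∞ with htop | htop
  · rw [htop, ENNReal.mul_top (by simp [Real.exp_pos])]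
    exact le_top
  have hu_countable : u.Countable := by
    have : Finite u := by
      by_contra! hinf
      rw [ENNReal.tsum_const_eq_top_of_ne_zero (by simp [Real.exp_pos]), top_le_iff] at hsum
      exact htop hsum
    exact u.to_countable
  calc μ E ≤ ∑' x : u, μ (bowenBall T x n ε) :=
        (measure_mono hcover).trans (measure_biUnion_le μ hu_countable _)
    _ ≤ ∑' _ : u, ENNReal.ofReal (Real.exp (-(t - s) * n)) *
          ENNReal.ofReal (Real.exp (-s * n)) := by
        refine ENNReal.tsum_le_tsum fun x => (hE x (huE x.2)).trans_eq ?_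
        rw [← ENNReal.ofReal_mul (Real.exp_nonneg _), ← Real.exp_add]
        ring_nf
    _ ≤ ENNReal.ofReal (Real.exp (-(t - s) * n)) * Ppre T s n δ E := by
        rw [ENNReal.tsum_mul_left]
        gcongr

lemma PpreEps_eq_top_of_frequently_measure_bowenBall_le (hst : s < t) (hδ : 0 ≤ δ)
    (hδε : 2 * δ < ε) (hE : μ E ≠ 0)
    (hfreq : ∀ x ∈ E, ∃ᶠ n : ℕ in atTop,
      μ (bowenBall T x n ε) ≤ ENNReal.ofReal (Real.exp (-t * n))) :
    PpreEps T s δ E = ∞ := by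
  contrapose! hE
  obtain ⟨N, hN⟩ := PpreEps_ne_top_iff.1 hE
  set a : ℕ → ℝ≥0∞ := fun n => ENNReal.ofReal (Real.exp (-(t - s) * n)) with ha_def
  have ha : ∑' n, a n ≠ ∞ := by
    have hexp : Summable fun n : ℕ => Real.exp (-(t - s) * n) := by
      simpa only [mul_comm] using Real.summable_exp_nat_mul_iff.2 (neg_lt_zero.2 (sub_pos.2 hst))
    rw [ha_def, ← ENNReal.ofReal_tsum_of_nonneg (fun n => Real.exp_nonneg _) hexp]
    exact ENNReal.ofReal_ne_top
  set A : ℕ → Set X := fun n =>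
    {x ∈ E | μ (bowenBall T x n ε) ≤ ENNReal.ofReal (Real.exp (-t * n))}
  have hcover (M : ℕ) : E ⊆ ⋃ k, A (k + M) := fun x hx => by
    obtain ⟨n, hn, hxn⟩ := frequently_atTop.1 (hfreq x hx) M
    rw [← Nat.sub_add_cancel hn] at hxn
    exact mem_iUnion.2 ⟨n - M, hx, hxn⟩
  have hA (n : ℕ) (hn : N ≤ n) : μ (A n) ≤ a n * Ppre T s N δ E :=
    (measure_le_exp_mul_Ppre hδ hδε fun x hx => hx.2).trans <| by
      gcongr
      exact (Ppre_anti_order hn).trans (Ppre_mono fun x hx => hx.1)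
  have hlim : Tendsto (fun M => (∑' k, a (k + M)) * Ppre T s N δ E) atTop (𝓝 0) := by
    simpa using ENNReal.Tendsto.mul_const (ENNReal.tendsto_sum_nat_add a ha) (Or.inr hN)
  refine nonpos_iff_eq_zero.1 (ge_of_tendsto hlim ?_)
  filter_upwards [eventually_ge_atTop N] with M hM
  calc μ E ≤ ∑' k, μ (A (k + M)) := (measure_mono (hcover M)).trans (measure_iUnion_le _)
    _ ≤ ∑' k, a (k + M) * Ppre T s N δ E :=
        ENNReal.tsum_le_tsum fun k => hA (k + M) (hM.trans (Nat.le_add_left M k))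
    _ = (∑' k, a (k + M)) * Ppre T s N δ E := ENNReal.tsum_mul_right

lemma packingOuterMeasure_eq_top_of_frequently_measure_bowenBall_le (hst : s < t) (hδ : 0 ≤ δ)
    (hδε : 2 * δ < ε) (hE : μ E ≠ 0)
    (hfreq : ∀ x ∈ E, ∃ᶠ n : ℕ in atTop,
      μ (bowenBall T x n ε) ≤ ENNReal.ofReal (Real.exp (-t * n))) :
    packingOuterMeasure T s δ E = ∞ := by
  refine iInf₂_eq_top.2 fun Z hZ => ?_
  obtain ⟨i, hi⟩ : ∃ i, μ (E ∩ Z i) ≠ 0 := by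
    contrapose! hE
    refine measure_mono_null ?_ (measure_iUnion_null hE)
    rw [← inter_iUnion]
    exact subset_inter subset_rfl hZ
  have htop : PpreEps T s δ (E ∩ Z i) = ∞ :=
    PpreEps_eq_top_of_frequently_measure_bowenBall_le hst hδ hδε hi fun x hx => hfreq x hx.1
  exact ENNReal.tsum_eq_top_of_eq_top
    ⟨i, top_le_iff.1 (htop.symm.trans_le (PpreEps_mono inter_subset_right))⟩

lemma upperEntropy_le_packEntropy [IsProbabilityMeasure μ] {K : Set X} (hK : ∀ᵐ x ∂μ, x ∈ K) :
    upperEntropy T μ ≤ packEntropy T K := by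
  refine le_of_forall_lt fun c hc => ?_
  obtain ⟨s, hcs, hs⟩ := ENNReal.lt_iff_exists_nnreal_btwn.1 hc
  obtain ⟨t, hst, ht⟩ := ENNReal.lt_iff_exists_nnreal_btwn.1 hs
  obtain ⟨ε, hε, hpos⟩ := exists_measure_lt_upperLocalEntropyEps_ne_zero ht
  have hst' : (s : ℝ) < t := NNReal.coe_lt_coe.2 (ENNReal.coe_lt_coe.1 hst)
  set A := {x | (t : ℝ≥0∞) < upperLocalEntropyEps T μ ε x}
  have hKA : μ (K ∩ A) ≠ 0 := by rwa [Measure.measure_inter_eq_of_ae hK]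
  have hfreq : ∀ x ∈ K ∩ A, ∃ᶠ n : ℕ in atTop,
      μ (bowenBall T x n ε) ≤ ENNReal.ofReal (Real.exp (-t * n)) := fun x hx =>
    frequently_measure_bowenBall_le_exp (s.coe_nonneg.trans_lt hst')
      (by rw [ENNReal.ofReal_coe_nnreal]; exact hx.2)
  have htop : packingOuterMeasure T s (ε / 3) (K ∩ A) = ∞ :=
    packingOuterMeasure_eq_top_of_frequently_measure_bowenBall_le hst' (by positivity)
      (by linarith) hKA hfreq
  rw [← ENNReal.ofReal_coe_nnreal] at hcs
  refine hcs.trans_le (ofReal_le_packEntropy (ε := ε / 3) (by positivity) ?_)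
  exact top_le_iff.1 (htop.symm.trans_le (measure_mono inter_subset_left))

end LowerBound

section Localization

variable {α : Type*} [TopologicalSpace α]

lemma exists_subset_forall_nhds_outerMeasure_ne_zero (μ : OuterMeasure α) {K : Set α}
    [SecondCountableTopology K] (hK : μ K ≠ 0) :
    ∃ K' ⊆ K, K'.Nonempty ∧ ∀ x ∈ K', ∀ U ∈ 𝓝 x, μ (K' ∩ U) ≠ 0 := by
  set K' := {x ∈ K | ∀ U ∈ 𝓝 x, μ (K ∩ U) ≠ 0}
  have hdiff : μ (K \ K') = 0 := by
    have hlocal : ∀ x ∈ (Subtype.val ⁻¹' K')ᶜ, ∃ u ∈ 𝓝[(Subtype.val ⁻¹' K')ᶜ] x,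
        OuterMeasure.comap ((↑) : K → α) μ u = 0 := fun x hx => by
      obtain ⟨U, hU, hUnull⟩ : ∃ U ∈ 𝓝 (x : α), μ (K ∩ U) = 0 := by
        by_contra! hne
        exact hx ⟨x.2, hne⟩
      refine ⟨Subtype.val ⁻¹' U,
        mem_nhdsWithin_of_mem_nhds (continuous_subtype_val.continuousAt.preimage_mem_nhds hU), ?_⟩
      rwa [OuterMeasure.comap_apply, Subtype.image_preimage_coe]
    have hnull := measure_null_of_locally_null _ hlocal
    rwa [OuterMeasure.comap_apply, ← preimage_compl, Subtype.image_preimage_coe,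
      ← sdiff_eq] at hnull
  refine ⟨K', sep_subset .., ?_, fun x hx U hU hnull => hx.2 U hU ?_⟩
  · rw [nonempty_iff_ne_empty]
    intro hempty
    exact hK (by simpa [hempty] using hdiff)
  · refine measure_mono_null (t := K' ∩ U ∪ K \ K') (fun y hy => ?_)
      (measure_union_null hnull hdiff)
    by_cases hy' : y ∈ K'
    exacts [Or.inl ⟨hy', hy.2⟩, Or.inr ⟨hy.1, hy'⟩]

end Localization

section Separation

variable {X : Type*} [MetricSpace X] {T : X → X} {ε r : ℝ} {m : X → ℕ} {F : Set X}

open Metric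

/-- Distinct points `x, y ∈ F`, each moved by at most `r`, are more than `ε` apart in the Bowen
metric of order `m x`. For `r = 0` this follows from disjointness of the balls
`B̄_{m x}(x, ε)`. -/
def SeparatedWithin (T : X → X) (ε r : ℝ) (m : X → ℕ) (F : Set X) : Prop :=
  F.Pairwise fun x y => ∀ z ∈ closedBall x r, ∀ w ∈ closedBall y r,
    w ∉ bowenClosedBall T z (m x) ε

lemma separatedWithin_zero_iff :
    SeparatedWithin T ε 0 m F ↔ F.Pairwise fun x y => y ∉ bowenClosedBall T x (m x) ε := by
  simp [SeparatedWithin]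

namespace SeparatedWithin

lemma congr {m' : X → ℕ} (h : SeparatedWithin T ε r m F) (hm : EqOn m m' F) :
    SeparatedWithin T ε r m' F := fun x hx _ hy hxy =>
  show ∀ z ∈ _, ∀ w ∈ _, w ∉ bowenClosedBall T z (m' x) ε from hm hx ▸ h hx hy hxy

lemma pairwiseDisjoint_closedBall (h : SeparatedWithin T ε r m F) (hε : 0 ≤ ε) :
    F.PairwiseDisjoint fun x => closedBall x r := fun _ hx _ hy hxy =>
  disjoint_left.2 fun z hzx hzy => h hx hy hxy z hzx z hzy (mem_bowenClosedBall_self hε)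

lemma exists_pos_radius (hT : Continuous T) (hF : F.Finite) (h : SeparatedWithin T ε 0 m F)
    (hr : 0 < r) : ∃ γ, 0 < γ ∧ γ ≤ r ∧ SeparatedWithin T ε γ m F := by
  have hpair : ∀ x ∈ F, ∀ y ∈ F, x ≠ y → ∀ᶠ γ in 𝓝[>] (0 : ℝ),
      ∀ z ∈ closedBall x γ, ∀ w ∈ closedBall y γ, w ∉ bowenClosedBall T z (m x) ε := by
    intro x hx y hy hxy
    have hmem : {p : X × X | p.2 ∉ bowenClosedBall T p.1 (m x) ε} ∈ 𝓝 (x, y) :=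
      (isClosed_setOf_mem_bowenClosedBall hT (m x) ε).isOpen_compl.mem_nhds
        (separatedWithin_zero_iff.1 h hx hy hxy)
    filter_upwards [nhdsWithin_le_nhds (eventually_closedBall_subset hmem)] with γ hγ z hz w hw
    rw [← closedBall_prod_same] at hγ
    exact @hγ (z, w) ⟨hz, hw⟩
  have hall : ∀ᶠ γ in 𝓝[>] (0 : ℝ), SeparatedWithin T ε γ m F := by
    simp only [SeparatedWithin, Set.Pairwise, eventually_all_finite hF, eventually_imp_distrib_left]
    exact hpair
  obtain ⟨γ, hγ, hγ_pos, hγr⟩ := (hall.and (Ioc_mem_nhdsGT hr)).exists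
  exact ⟨γ, hγ_pos, hγr, hγ⟩

lemma biUnion {E : X → Set X} {n : X → ℕ} (h : SeparatedWithin T ε r n F)
    (hE : ∀ x ∈ F, E x ⊆ closedBall x r) (hm : ∀ x ∈ F, ∀ y ∈ E x, n x ≤ m y)
    (hsep : ∀ x ∈ F, SeparatedWithin T ε 0 m (E x)) :
    SeparatedWithin T ε 0 m (⋃ x ∈ F, E x) := by
  rw [separatedWithin_zero_iff]
  intro y hy z hz hyz hmem
  obtain ⟨x, hx, hyx⟩ := mem_iUnion₂.1 hy
  obtain ⟨x', hx', hzx'⟩ := mem_iUnion₂.1 hz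
  rcases eq_or_ne x x' with rfl | hne
  · exact separatedWithin_zero_iff.1 (hsep x hx) hyx hzx' hyz hmem
  · exact h hx hx' hne y (hE x hx hyx) z (hE x' hx' hzx')
      (bowenClosedBall_anti_order (hm x hx y hyx) hmem)

end SeparatedWithin

end Separation

section FiniteMasses

lemma exists_le_sum_eq {ι : Type*} {F : Finset ι} {w : ι → ℝ≥0∞} {a : ℝ≥0∞}
    (ha : a ≤ ∑ i ∈ F, w i) (hw : ∑ i ∈ F, w i ≠ ∞) : ∃ v ≤ w, ∑ i ∈ F, v i = a := by
  refine ⟨fun i => a / (∑ j ∈ F, w j) * w i, fun i => ?_, ?_⟩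
  · exact mul_le_of_le_one_left zero_le (ENNReal.div_le_of_le_mul (by rwa [one_mul]))
  · rw [← Finset.mul_sum]
    exact ENNReal.div_mul_cancel' (fun h0 => by simpa [h0] using ha) fun htop => absurd htop hw

lemma exists_eq_of_pairwiseDisjoint {ι α : Type*} [Nonempty ι] {s : Set ι} {E : ι → Set α}
    (h : s.PairwiseDisjoint E) : ∃ p : α → ι, ∀ i ∈ s, ∀ a ∈ E i, p a = i := by
  have hex (a : α) : ∃ j, ∀ i ∈ s, a ∈ E i → j = i := by
    by_cases ha : ∃ j ∈ s, a ∈ E j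
    · obtain ⟨j, hj, haj⟩ := ha
      exact ⟨j, fun i hi hai => h.elim_set hj hi a haj hai⟩
    · exact ⟨Classical.arbitrary ι, fun i hi hai => absurd ⟨i, hi, hai⟩ ha⟩
  choose p hp using hex
  exact ⟨p, fun i hi a ha => hp a i hi ha⟩

variable {X : Type*} [MetricSpace X] {T : X → X} {s ε : ℝ} {Z : Set X}

lemma exists_finset_lt_sum_of_lt_Ppre (hε : 0 ≤ ε) {N : ℕ} {c : ℝ≥0∞} (h : c < Ppre T s N ε Z) :
    ∃ (F : Finset X) (m : X → ℕ), ↑F ⊆ Z ∧ (∀ y ∈ F, N ≤ m y) ∧ SeparatedWithin T ε 0 m F ∧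
      c < ∑ y ∈ F, ENNReal.ofReal (Real.exp (-s * m y)) := by
  classical
  simp only [Ppre, lt_iSup_iff, ENNReal.tsum_eq_iSup_sum] at h
  obtain ⟨I, x, n, hx, hdisj, F, hF⟩ := h
  have hnot_mem {i j : I} (hij : i ≠ j) : x j ∉ bowenClosedBall T (x i) (n i) ε := fun hmem =>
    disjoint_left.1 (hdisj i i.2 j j.2 (Subtype.coe_injective.ne hij)) hmem
      (mem_bowenClosedBall_self hε)
  have hinj : Function.Injective fun i : I => x i := fun i j hij => by
    by_contra hne
    exact hnot_mem hne (by simpa [← hij] using mem_bowenClosedBall_self hε)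
  set m : X → ℕ := Function.extend (fun i : I => x i) (fun i => n i) 0
  have hm (i : I) : m (x i) = n i := hinj.extend_apply _ _ i
  refine ⟨F.image fun i : I => x i, m, ?_, ?_, ?_, ?_⟩
  · rw [Finset.coe_image, image_subset_iff]
    exact fun i _ => (hx i i.2).1
  · refine Finset.forall_mem_image.2 fun i _ => ?_
    rw [hm]
    exact (hx i i.2).2
  · rw [separatedWithin_zero_iff, Finset.coe_image]
    rintro _ ⟨i, -, rfl⟩ _ ⟨j, -, rfl⟩ hij
    simpa only [hm] using hnot_mem fun h : i = j => hij (by rw [h])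
  · simpa only [Finset.sum_image hinj.injOn, hm] using hF

lemma exists_finset_sum_eq_of_PpreEps_eq_top (hε : 0 ≤ ε) (hZ : PpreEps T s ε Z = ∞) (N : ℕ)
    {a : ℝ≥0∞} (ha : a ≠ ∞) :
    ∃ (F : Finset X) (m : X → ℕ) (v : X → ℝ≥0∞), ↑F ⊆ Z ∧ (∀ y ∈ F, N ≤ m y) ∧
      SeparatedWithin T ε 0 m F ∧ (∀ y, v y ≤ ENNReal.ofReal (Real.exp (-s * m y))) ∧
      ∑ y ∈ F, v y = a := by
  have hlt : a < Ppre T s N ε Z := by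
    rw [iInf_eq_top.1 hZ N]
    exact ha.lt_top
  obtain ⟨F, m, hFZ, hm, hsep, hsum⟩ := exists_finset_lt_sum_of_lt_Ppre hε hlt
  obtain ⟨v, hv, hva⟩ := exists_le_sum_eq hsum.le (ENNReal.sum_ne_top.2 fun _ _ => by simp)
  exact ⟨F, m, v, hFZ, hm, hsep, hv, hva⟩

end FiniteMasses

/-- A finitely supported probability vector on `K` of Joyce–Preiss type: the atom `x` carries a
mass of at most `exp (-s n_x)`, where `n_x = order x`, and the atoms are separated in the Bowen
metrics of these orders with room for moving each of them by `radius`. -/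
structure MassDistribution {X : Type*} [MetricSpace X] (T : X → X) (s ε : ℝ) (K : Set X) where
  support : Finset X
  order : X → ℕ
  mass : X → ℝ≥0∞
  radius : ℝ
  radius_pos : 0 < radius
  support_subset : ↑support ⊆ K
  sum_mass : ∑ x ∈ support, mass x = 1
  mass_le : ∀ x ∈ support, mass x ≤ ENNReal.ofReal (Real.exp (-s * order x))
  separated : SeparatedWithin T ε radius order support

namespace MassDistribution

open Metric

variable {X : Type*} [MetricSpace X] {T : X → X} {s ε : ℝ} {K : Set X}

/-- `R ≤ S` says that `R` refines `S`: every atom `y` of `R` descends from an atom `q y` of `S`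
whose ball contains that of `y`, and `q` pushes the masses of `R` forward to those of `S`. -/
instance : Preorder (MassDistribution T s ε K) where
  le R S := ∃ q : X → X,
    (∀ y ∈ R.support, q y ∈ S.support ∧ closedBall y R.radius ⊆ closedBall (q y) S.radius) ∧
    ∀ f : X → ℝ≥0∞,
      ∑ y ∈ R.support, R.mass y * f (q y) = ∑ x ∈ S.support, S.mass x * f x
  le_refl _ := ⟨id, fun _ hy => ⟨hy, subset_rfl⟩, fun _ => rfl⟩
  le_trans _ _ _ := by
    rintro ⟨p, hp, hp_sum⟩ ⟨q, hq, hq_sum⟩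
    exact ⟨q ∘ p, fun y hy => ⟨(hq _ (hp y hy).1).1, (hp y hy).2.trans (hq _ (hp y hy).1).2⟩,
      fun f => (hp_sum (f ∘ q)).trans (hq_sum f)⟩

lemma mass_ne_top (S : MassDistribution T s ε K) {x : X} (hx : x ∈ S.support) :
    S.mass x ≠ ∞ :=
  ne_top_of_le_ne_top ENNReal.ofReal_ne_top (S.mass_le x hx)

/-- The unit mass at a point, of order `0`. -/
def single {x : X} (hx : x ∈ K) : MassDistribution T s ε K where
  support := {x}
  order _ := 0
  mass _ := 1
  radius := 1
  radius_pos := one_pos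
  support_subset := by simpa using hx
  sum_mass := by simp
  mass_le := by simp
  separated := by simp [SeparatedWithin]

lemma exists_le_of_packings (hT : Continuous T) (hε : 0 ≤ ε) (S : MassDistribution T s ε K)
    {E : X → Finset X} {n : X → X → ℕ} {v : X → X → ℝ≥0∞}
    (hE : ∀ x ∈ S.support, (E x : Set X) ⊆ K ∩ closedBall x (S.radius / 2))
    (hn : ∀ x ∈ S.support, ∀ y ∈ E x, S.order x ≤ n x y)
    (hsep : ∀ x ∈ S.support, SeparatedWithin T ε 0 (n x) (E x))
    (hv : ∀ x ∈ S.support, ∀ y ∈ E x, v x y ≤ ENNReal.ofReal (Real.exp (-s * n x y)))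
    (hsum : ∀ x ∈ S.support, ∑ y ∈ E x, v x y = S.mass x) :
    ∃ R ≤ S, ∀ y ∈ R.support, ∃ x ∈ S.support, y ∈ E x ∧ R.order y = n x y := by
  classical
  have hE_ball (x : X) (hx : x ∈ S.support) : (E x : Set X) ⊆ closedBall x S.radius :=
    ((hE x hx).trans inter_subset_right).trans
      (closedBall_subset_closedBall (half_le_self S.radius_pos.le))
  have hdisj : (S.support : Set X).PairwiseDisjoint fun x => (E x : Set X) :=
    (S.separated.pairwiseDisjoint_closedBall hε).mono_on hE_ball
  obtain ⟨x₀, -⟩ : S.support.Nonempty :=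
    Finset.nonempty_of_sum_ne_zero (S.sum_mass.trans_ne one_ne_zero)
  have : Nonempty X := ⟨x₀⟩
  obtain ⟨p, hp⟩ := exists_eq_of_pairwiseDisjoint hdisj
  have hF {y : X} (hy : y ∈ S.support.biUnion E) : p y ∈ S.support ∧ y ∈ E (p y) := by
    obtain ⟨x, hx, hyx⟩ := Finset.mem_biUnion.1 hy
    rw [hp x hx y hyx]
    exact ⟨hx, hyx⟩
  have hF_sum (f : X → ℝ≥0∞) :
      ∑ y ∈ S.support.biUnion E, v (p y) y * f (p y) = ∑ x ∈ S.support, S.mass x * f x := by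
    rw [Finset.sum_biUnion (Finset.pairwiseDisjoint_coe.1 hdisj)]
    refine Finset.sum_congr rfl fun x hx => ?_
    rw [← hsum x hx, Finset.sum_mul]
    exact Finset.sum_congr rfl fun y hy => by rw [hp x hx y hy]
  have hF_sep : SeparatedWithin T ε 0 (fun y => n (p y) y) (S.support.biUnion E : Finset X) := by
    rw [Finset.coe_biUnion]
    refine S.separated.biUnion hE_ball (fun x hx y hy => ?_) fun x hx =>
      (hsep x hx).congr fun y hy => ?_
    · simpa only [hp x hx y hy] using hn x hx y hy
    · rw [hp x hx y hy]
  obtain ⟨γ, hγ, hγr, hγ_sep⟩ :=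
    hF_sep.exists_pos_radius hT (Finset.finite_toSet _) (half_pos S.radius_pos)
  refine ⟨{ support := S.support.biUnion E, order := fun y => n (p y) y, mass := fun y => v (p y) y
            radius := γ, radius_pos := hγ, separated := hγ_sep
            support_subset := fun y hy => (hE _ (hF hy).1 (hF hy).2).1
            sum_mass := by simpa [S.sum_mass] using hF_sum 1
            mass_le := fun y hy => hv _ (hF hy).1 y (hF hy).2 },
    ⟨p, fun y hy => ⟨(hF hy).1, closedBall_subset_closedBall' ?_⟩, hF_sum⟩,
    fun y hy => ⟨p y, (hF hy).1, (hF hy).2, rfl⟩⟩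
  have hdist : dist y (p y) ≤ S.radius / 2 := (hE _ (hF hy).1 (hF hy).2).2
  linarith

lemma exists_le_forall_le_order (hT : Continuous T) (hε : 0 ≤ ε)
    (hK : ∀ x ∈ K, ∀ U ∈ 𝓝 x, PpreEps T s ε (K ∩ U) = ∞) (S : MassDistribution T s ε K) (N : ℕ) :
    ∃ R ≤ S, ∀ y ∈ R.support, N ≤ R.order y := by
  have hpacking (x : X) (hx : x ∈ S.support) :=
    exists_finset_sum_eq_of_PpreEps_eq_top hε
      (hK x (S.support_subset hx) _ (closedBall_mem_nhds x (half_pos S.radius_pos)))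
      (max N (S.order x)) (S.mass_ne_top hx)
  choose! E n v hE hn hsep hv hsum using hpacking
  obtain ⟨R, hRS, hR⟩ := S.exists_le_of_packings hT hε hE
    (fun x hx y hy => (le_max_right _ _).trans (hn x hx y hy)) hsep
    (fun x hx y _ => hv x hx y) hsum
  refine ⟨R, hRS, fun y hy => ?_⟩
  obtain ⟨x, hx, hyx, hy_order⟩ := hR y hy
  rw [hy_order]
  exact (le_max_left _ _).trans (hn x hx y hyx)

lemma exists_antitone_forall_le_order (hT : Continuous T) (hε : 0 ≤ ε) (hne : K.Nonempty)
    (hK : ∀ x ∈ K, ∀ U ∈ 𝓝 x, PpreEps T s ε (K ∩ U) = ∞) :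
    ∃ S : ℕ → MassDistribution T s ε K, Antitone S ∧
      ∀ i, ∀ x ∈ (S i).support, i ≤ (S i).order x := by
  obtain ⟨x₀, hx₀⟩ := hne
  choose next hle hord using exists_le_forall_le_order hT hε hK
  let S : ℕ → MassDistribution T s ε K := fun i =>
    Nat.rec (single hx₀) (fun i R => next R (i + 1)) i
  refine ⟨S, antitone_nat_of_succ_le fun i => hle (S i) (i + 1), fun i => ?_⟩
  cases i with
  | zero => exact fun _ _ => Nat.zero_le _
  | succ i => exact hord (S i) (i + 1)

/-- The union of the balls of radius `radius` about the atoms. It contains the atoms of every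
refinement, so it has full measure for a limit of refinements. -/
def nbhd (S : MassDistribution T s ε K) : Set X :=
  ⋃ x ∈ S.support, closedBall x S.radius

lemma isClosed_nbhd (S : MassDistribution T s ε K) : IsClosed S.nbhd :=
  isClosed_biUnion_finset fun _ _ => isClosed_closedBall

lemma support_subset_nbhd_of_le {R S : MassDistribution T s ε K} (h : R ≤ S) :
    (R.support : Set X) ⊆ S.nbhd := fun y hy => by
  obtain ⟨q, hq, -⟩ := h
  exact mem_biUnion (hq y hy).1 ((hq y hy).2 (mem_closedBall_self R.radius_pos.le))

variable [MeasurableSpace X]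

/-- The purely atomic measure with the given masses. -/
noncomputable def measure (S : MassDistribution T s ε K) : Measure X :=
  ∑ x ∈ S.support, S.mass x • Measure.dirac x

instance (S : MassDistribution T s ε K) : IsProbabilityMeasure S.measure :=
  ⟨by simp [measure, Measure.finsetSum_apply, S.sum_mass]⟩

variable [MeasurableSingletonClass X]

lemma measure_apply (S : MassDistribution T s ε K) (A : Set X) :
    S.measure A = ∑ x ∈ S.support, S.mass x * A.indicator 1 x := by
  simp [measure, Measure.finsetSum_apply]

lemma measure_compl_eq_zero (S : MassDistribution T s ε K) {C : Set X}
    (h : (S.support : Set X) ⊆ C) : S.measure Cᶜ = 0 := by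
  rw [measure_apply]
  exact Finset.sum_eq_zero fun x hx => by simp [h hx]

-- By separation, all atoms of `R` in the Bowen ball descend from `x`.
lemma measure_bowenBall_le {R S : MassDistribution T s ε K} (h : R ≤ S) {x z : X}
    (hx : x ∈ S.support) (hz : z ∈ closedBall x S.radius) :
    R.measure (bowenBall T z (S.order x) ε) ≤ ENNReal.ofReal (Real.exp (-s * S.order x)) := by
  obtain ⟨q, hq, hq_sum⟩ := h
  have hdescend (y : X) (hy : y ∈ R.support) (hyB : y ∈ bowenBall T z (S.order x) ε) : q y = x := by
    by_contra hne
    exact S.separated hx (hq y hy).1 (Ne.symm hne) z hz y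
      ((hq y hy).2 (mem_closedBall_self R.radius_pos.le)) (bowenBall_subset_bowenClosedBall hyB)
  calc R.measure (bowenBall T z (S.order x) ε)
      = ∑ y ∈ R.support, R.mass y * (bowenBall T z (S.order x) ε).indicator 1 y :=
        R.measure_apply _
    _ ≤ ∑ y ∈ R.support, R.mass y * indicator {x} 1 (q y) := by
        refine Finset.sum_le_sum fun y hy => ?_
        gcongr
        refine indicator_apply_le' (fun hyB => ?_) fun _ => zero_le
        simp [hdescend y hy hyB]
    _ = ∑ x' ∈ S.support, S.mass x' * indicator {x} 1 x' := hq_sum _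
    _ = S.measure {x} := (S.measure_apply _).symm
    _ = S.mass x := by
        classical
        simp [measure_apply, indicator_apply, hx]
    _ ≤ ENNReal.ofReal (Real.exp (-s * S.order x)) := S.mass_le x hx

end MassDistribution

section UpperBound

lemma exists_forall_isOpen_measure_le_limsup {Ω ι : Type*} [MeasurableSpace Ω] [TopologicalSpace Ω]
    [T2Space Ω] [BorelSpace Ω] [HasOuterApproxClosed Ω] {L : Filter ι} [L.NeBot]
    {ν : ι → ProbabilityMeasure Ω} (hν : IsTightMeasureSet (range fun i => (ν i : Measure Ω))) :
    ∃ μ : ProbabilityMeasure Ω, ∀ G, IsOpen G →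
      (μ : Measure Ω) G ≤ limsup (fun i => (ν i : Measure Ω) G) L := by
  have hcompact : IsCompact (closure (range ν)) :=
    isCompact_closure_of_isTightMeasureSet (by simpa [range] using hν)
  obtain ⟨μ, -, hμ⟩ := hcompact.ultrafilter_le_nhds ((Ultrafilter.of L).map ν)
    (le_principal_iff.2 (mem_map.2 (univ_mem' fun i => subset_closure (mem_range_self i))))
  refine ⟨μ, fun G hG => ?_⟩
  calc (μ : Measure Ω) G
      ≤ liminf (fun i => (ν i : Measure Ω) G) (Ultrafilter.of L) :=
        ProbabilityMeasure.le_liminf_measure_open_of_tendsto hμ hG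
    _ ≤ limsup (fun i => (ν i : Measure Ω) G) (Ultrafilter.of L) := liminf_le_limsup
    _ ≤ limsup (fun i => (ν i : Measure Ω) G) L := limsup_le_limsup_of_le (Ultrafilter.of_le L)

variable {X : Type*} [MetricSpace X] [MeasurableSpace X] {T : X → X} {s t ε : ℝ} {K : Set X}

namespace MassDistribution

lemma exists_limit_measure [BorelSpace X] (hT : Continuous T) (hK : IsCompact K) {K' : Set X}
    (hK' : K' ⊆ K) {S : ℕ → MassDistribution T s ε K'} (hS : Antitone S)
    (hord : ∀ i, ∀ x ∈ (S i).support, i ≤ (S i).order x) :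
    ∃ μ : Measure X, IsProbabilityMeasure μ ∧ μ K = 1 ∧
      ∀ᵐ z ∂μ, ∃ᶠ n : ℕ in atTop,
        μ (bowenBall T z n ε) ≤ ENNReal.ofReal (Real.exp (-s * n)) := by
  let ν : ℕ → ProbabilityMeasure X := fun i => ⟨(S i).measure, inferInstance⟩
  have htight : IsTightMeasureSet (range fun i => (ν i : Measure X)) := by
    rw [isTightMeasureSet_iff_exists_isCompact_measure_compl_le]
    refine fun δ _ => ⟨K, hK, forall_mem_range.2 fun i => ?_⟩
    exact ((S i).measure_compl_eq_zero ((S i).support_subset.trans hK')).trans_le zero_le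
  obtain ⟨μ, hμ⟩ := exists_forall_isOpen_measure_le_limsup (L := atTop) htight
  have hopen {G : Set X} {c : ℝ≥0∞} (hG : IsOpen G) (i : ℕ)
      (h : ∀ j ≥ i, (S j).measure G ≤ c) : (μ : Measure X) G ≤ c :=
    (hμ G hG).trans (limsup_le_of_le (by isBoundedDefault) (eventually_atTop.2 ⟨i, h⟩))
  have hclosed {C : Set X} (hC : IsClosed C) (i : ℕ)
      (h : ∀ j ≥ i, ((S j).support : Set X) ⊆ C) : (μ : Measure X) Cᶜ = 0 :=
    nonpos_iff_eq_zero.1 <| hopen hC.isOpen_compl i fun j hj =>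
      ((S j).measure_compl_eq_zero (h j hj)).le
  refine ⟨μ, inferInstance, ?_, ?_⟩
  · rw [← prob_compl_eq_zero_iff hK.measurableSet]
    exact hclosed hK.isClosed 0 fun j _ => (S j).support_subset.trans hK'
  · have hnbhd : ∀ᵐ z ∂(μ : Measure X), ∀ i, z ∈ (S i).nbhd := ae_all_iff.2 fun i =>
      hclosed (S i).isClosed_nbhd i fun j hj => support_subset_nbhd_of_le (hS hj)
    filter_upwards [hnbhd] with z hz
    refine frequently_atTop.2 fun N => ?_
    obtain ⟨x, hx, hzx⟩ := mem_iUnion₂.1 (hz N)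
    exact ⟨(S N).order x, hord N x hx, hopen (isOpen_bowenBall hT _ _ _) N fun j hj =>
      measure_bowenBall_le (hS hj) hx hzx⟩

end MassDistribution

lemma exists_measure_ae_frequently_le [BorelSpace X] (hT : Continuous T) (hst : s < t)
    (hε : 0 ≤ ε) (hK : IsCompact K) (h : packingOuterMeasure T t ε K ≠ 0) :
    ∃ μ : Measure X, IsProbabilityMeasure μ ∧ μ K = 1 ∧
      ∀ᵐ z ∂μ, ∃ᶠ n : ℕ in atTop,
        μ (bowenBall T z n ε) ≤ ENNReal.ofReal (Real.exp (-s * n)) := by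
  have := isCompact_iff_compactSpace.1 hK
  obtain ⟨K', hK'K, hne, hK'⟩ := exists_subset_forall_nhds_outerMeasure_ne_zero _ h
  obtain ⟨S, hS, hord⟩ := MassDistribution.exists_antitone_forall_le_order hT hε hne
    fun x hx U hU => PpreEps_eq_top_of_packingOuterMeasure_ne_zero hst (hK' x hx U hU)
  exact MassDistribution.exists_limit_measure hT hK hK'K hS hord

lemma ofReal_le_upperEntropy_of_ae_frequently_le {μ : Measure X} [IsProbabilityMeasure μ]
    (hε : 0 < ε)
    (h : ∀ᵐ z ∂μ, ∃ᶠ n : ℕ in atTop,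
      μ (bowenBall T z n ε) ≤ ENNReal.ofReal (Real.exp (-s * n))) :
    ENNReal.ofReal s ≤ upperEntropy T μ := by
  rcases le_or_gt s 0 with hs | hs
  · simp [ENNReal.ofReal_of_nonpos hs]
  calc ENNReal.ofReal s = ∫⁻ _, ENNReal.ofReal s ∂μ := by simp
    _ ≤ upperEntropy T μ := by
      refine lintegral_mono_ae ?_
      filter_upwards [h] with z hz
      refine le_iSup₂_of_le ε hε (le_limsup_of_frequently_le' ?_)
      exact (hz.and_eventually (eventually_gt_atTop 0)).mono fun n hn =>
        (ofReal_le_negLog_div_iff hs hn.2).2 hn.1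

end UpperBound

theorem packEntropy_eq_iSup_upperEntropy_general {X : Type*} [MetricSpace X] [MeasurableSpace X]
    [BorelSpace X] {T : X → X} (hT : Continuous T) {K : Set X} (hK : IsCompact K) :
    packEntropy T K =
      ⨆ (μ : Measure X) (_ : IsProbabilityMeasure μ) (_ : μ K = 1), upperEntropy T μ := by
  refine le_antisymm ?_ (iSup_le fun μ => iSup₂_le fun _ hμK => ?_)
  · refine iSup₂_le fun ε hε => iSup₂_le fun t ht => le_of_forall_lt fun c hc => ?_
    obtain ⟨s, hcs, hst⟩ := ENNReal.lt_iff_exists_nnreal_btwn.1 hc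
    rw [← ENNReal.ofReal_coe_nnreal] at hcs hst
    have ht_ne_zero : packingOuterMeasure T t ε K ≠ 0 := ht.trans_ne ENNReal.top_ne_zero
    obtain ⟨μ, hμ, hμK, hfreq⟩ := exists_measure_ae_frequently_le hT
      (ENNReal.ofReal_lt_ofReal_iff'.1 hst).1 hε.le hK ht_ne_zero
    have hle : ENNReal.ofReal s ≤ upperEntropy T μ :=
      ofReal_le_upperEntropy_of_ae_frequently_le hε hfreq
    exact hcs.trans_le (hle.trans (le_iSup_of_le μ (le_iSup₂_of_le hμ hμK le_rfl)))
  · refine upperEntropy_le_packEntropy (mem_ae_iff.2 ?_)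
    exact (prob_compl_eq_zero_iff hK.measurableSet).2 hμK

/-- **Variational principle for packing topological entropy of compact sets**
(Feng–Huang, Theorem 1.3(i)): for a topological dynamical system `(X,T)` and a non-empty
compact set `K ⊆ X`,
`h^P_top(T,K) = sup { h̄_μ(T) : μ a Borel probability measure on X with μ(K) = 1 }`. -/
theorem packEntropy_eq_iSup_upperEntropy
    {X : Type*} [MetricSpace X] [CompactSpace X] [MeasurableSpace X] [BorelSpace X]
    (T : X → X) (hT : Continuous T) (K : Set X) (hne : K.Nonempty) (hK : IsCompact K) :
    packEntropy T K =
      ⨆ (μ : Measure X) (_ : IsProbabilityMeasure μ) (_ : μ K = 1), upperEntropy T μ :=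
  packEntropy_eq_iSup_upperEntropy_general hT hK
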